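/- Let (u_l, u_f) be a finite Stackelberg game with utilities in [0,1], n ≥ 2 follower actions, and inducibility gap Δ > 0. Then the δ-RSE leader utility converges to the SSE leader utility as δ → 0^+: lim_{δ → 0^+} u_RSE(δ) = u_SSE. -/

import Mathlib

open Finset Set

noncomputable section

/-- The simplex of mixed strategies over `m` actions. -/
def simplex (m : ℕ) : Set (Fin m → ℝ) := stdSimplex ℝ (Fin m)

/-- Mixed-strategy extension of a utility matrix: `u(x, j) = ∑ i, x i * u i j`. -/
def mixU {m n : ℕ} (u : Fin m → Fin n → ℝ) (x : Fin m → ℝ) (j : Fin n) : ℝ :=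
  ∑ i, x i * u i j

/-- The follower's δ-optimal response set (strict inequality):
`BR_δ(x) = {j : u_f(x,j) > max_{j'} u_f(x,j') - δ}`. -/
def BRd {m n : ℕ} (uf : Fin m → Fin n → ℝ) (δ : ℝ) (x : Fin m → ℝ) : Set (Fin n) :=
  {j | mixU uf x j > (⨆ j', mixU uf x j') - δ}

/-- The follower's exact best-response set. -/
def BR0 {m n : ℕ} (uf : Fin m → Fin n → ℝ) (x : Fin m → ℝ) : Set (Fin n) :=
  {j | mixU uf x j = ⨆ j', mixU uf x j'}

/-- Worst-case leader utility over the follower's δ-optimal response set: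
`min_{j ∈ BR_δ(x)} u_l(x, j)`. -/
def valBR {m n : ℕ} (ul uf : Fin m → Fin n → ℝ) (δ : ℝ) (x : Fin m → ℝ) : ℝ :=
  sInf (mixU ul x '' BRd uf δ x)

/-- The δ-RSE leader utility `u_RSE(δ) = sup_{x ∈ Δ^m} min_{j ∈ BR_δ(x)} u_l(x, j)`. -/
def uRSE {m n : ℕ} (ul uf : Fin m → Fin n → ℝ) (δ : ℝ) : ℝ :=
  sSup (valBR ul uf δ '' simplex m)

/-- The SSE leader utility `u_SSE = sup_{x ∈ Δ^m} max_{j ∈ BR_0(x)} u_l(x, j)`. -/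
def uSSE {m n : ℕ} (ul uf : Fin m → Fin n → ℝ) : ℝ :=
  sSup ((fun x => sSup (mixU ul x '' BR0 uf x)) '' simplex m)

/-- The maximin leader utility `u_MM = sup_{x ∈ Δ^m} min_{j ∈ [n]} u_l(x, j)`. -/
def uMM {m n : ℕ} (ul : Fin m → Fin n → ℝ) : ℝ :=
  sSup ((fun x => ⨅ j, mixU ul x j) '' simplex m)

/-- The inducibility gap
`Δ = min_{j} sup_{x ∈ Δ^m} min_{j' ≠ j} (u_f(x, j) - u_f(x, j'))`. -/
def indGap {m n : ℕ} (uf : Fin m → Fin n → ℝ) : ℝ :=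
  ⨅ j, sSup ((fun x => ⨅ j' : {k : Fin n // k ≠ j}, (mixU uf x j - mixU uf x j'.1)) '' simplex m)

/-!
A best response `j` to `x` can be made the unique best response by moving `x` slightly towards a
strategy at which `j` is the unique best response, at arbitrarily small cost to the leader. At such
a perturbed strategy every small enough `δ > 0` gives `BR_δ = BR_0 = {j}`, so the worst-case and the
optimistic leader utilities coincide there. Hence `u_RSE(δ)` eventually exceeds every number below
`u_SSE`, while `BR_0 ⊆ BR_δ` gives `u_RSE(δ) ≤ u_SSE`.
-/

open Filter Topology

section

variable {m n : ℕ}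

theorem continuous_mixU (u : Fin m → Fin n → ℝ) (j : Fin n) : Continuous fun x => mixU u x j := by
  unfold mixU
  fun_prop

theorem mixU_lineMap (u : Fin m → Fin n → ℝ) (x y : Fin m → ℝ) (t : ℝ) (j : Fin n) :
    mixU u (AffineMap.lineMap x y t) j = AffineMap.lineMap (mixU u x j) (mixU u y j) t := by
  simp only [mixU, AffineMap.lineMap_apply_module, Pi.add_apply, Pi.smul_apply, smul_eq_mul,
    add_mul, mul_assoc, Finset.sum_add_distrib, Finset.mul_sum]

theorem exists_forall_mixU_le (u : Fin m → Fin n → ℝ) :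
    ∃ C, ∀ x ∈ simplex m, ∀ j, mixU u x j ≤ C := by
  have hbdd (j : Fin n) : BddAbove ((mixU u · j) '' simplex m) :=
    (isCompact_stdSimplex ℝ (Fin m)).bddAbove_image (continuous_mixU u j).continuousOn
  choose C hC using hbdd
  exact ⟨⨆ j, C j, fun x hx j => (hC j (mem_image_of_mem _ hx)).trans
    (le_ciSup (Set.finite_range C).bddAbove j)⟩

theorem mixU_le_iSup (u : Fin m → Fin n → ℝ) (x : Fin m → ℝ) (j : Fin n) :
    mixU u x j ≤ ⨆ k, mixU u x k :=
  le_ciSup (Set.finite_range (mixU u x)).bddAbove j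

theorem BR0_nonempty [NeZero n] (uf : Fin m → Fin n → ℝ) (x : Fin m → ℝ) : (BR0 uf x).Nonempty :=
  exists_eq_ciSup_of_finite

theorem mem_BR0_iff {uf : Fin m → Fin n → ℝ} {x : Fin m → ℝ} {j : Fin n} :
    j ∈ BR0 uf x ↔ ∀ k, mixU uf x k ≤ mixU uf x j := by
  have : Nonempty (Fin n) := ⟨j⟩
  refine ⟨fun hj k => (mixU_le_iSup uf x k).trans_eq (Eq.symm hj), fun hj => ?_⟩
  exact (mixU_le_iSup uf x j).antisymm (ciSup_le hj)

theorem BR0_eq_singleton_iff {uf : Fin m → Fin n → ℝ} {x : Fin m → ℝ} {j : Fin n} :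
    BR0 uf x = {j} ↔ ∀ k ≠ j, mixU uf x k < mixU uf x j := by
  constructor
  · intro h k hk
    have hj : j ∈ BR0 uf x := h ▸ mem_singleton j
    refine (mem_BR0_iff.1 hj k).lt_of_ne fun hkj => hk ?_
    have hk' : k ∈ BR0 uf x := mem_BR0_iff.2 fun l => (mem_BR0_iff.1 hj l).trans_eq hkj.symm
    rwa [h] at hk'
  · intro h
    refine eq_singleton_iff_unique_mem.2 ⟨mem_BR0_iff.2 fun k => ?_, fun k hk => ?_⟩
    · obtain rfl | hk := eq_or_ne k j
      exacts [le_rfl, (h k hk).le]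
    · by_contra hkj
      exact (h k hkj).not_ge (mem_BR0_iff.1 hk j)

theorem BR0_subset_BRd (uf : Fin m → Fin n → ℝ) {δ : ℝ} (hδ : 0 < δ) (x : Fin m → ℝ) :
    BR0 uf x ⊆ BRd uf δ x :=
  fun _ hj => (sub_lt_self _ hδ).trans_eq (Eq.symm hj)

theorem eventually_BRd_eq_BR0 (uf : Fin m → Fin n → ℝ) (x : Fin m → ℝ) :
    ∀ᶠ δ in 𝓝[>] 0, BRd uf δ x = BR0 uf x := by
  have hexcluded (j : Fin n) (hj : j ∉ BR0 uf x) : ∀ᶠ δ in 𝓝[>] 0, j ∉ BRd uf δ x := by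
    have hlt : mixU uf x j < ⨆ k, mixU uf x k := (mixU_le_iSup uf x j).lt_of_ne hj
    filter_upwards [nhdsWithin_le_nhds (Iio_mem_nhds (sub_pos.2 hlt))] with δ hδ
    exact (lt_sub_comm.1 (mem_Iio.1 hδ)).not_gt
  have hsubset : ∀ᶠ δ in 𝓝[>] 0, ∀ j, j ∉ BR0 uf x → j ∉ BRd uf δ x :=
    eventually_all.2 fun j => eventually_imp_distrib_left.2 (hexcluded j)
  filter_upwards [hsubset, self_mem_nhdsWithin] with δ hδ hpos
  exact Subset.antisymm (fun j => not_imp_not.1 (hδ j)) (BR0_subset_BRd uf hpos x)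

theorem BR0_lineMap_eq_singleton {uf : Fin m → Fin n → ℝ} {x y : Fin m → ℝ} {j : Fin n}
    (hx : j ∈ BR0 uf x) (hy : BR0 uf y = {j}) {t : ℝ} (ht : t ∈ Ioc (0 : ℝ) 1) :
    BR0 uf (AffineMap.lineMap x y t) = {j} := by
  refine BR0_eq_singleton_iff.2 fun k hk => ?_
  rw [mixU_lineMap, mixU_lineMap]
  simp only [AffineMap.lineMap_apply_module, smul_eq_mul]
  exact add_lt_add_of_le_of_lt
    (mul_le_mul_of_nonneg_left (mem_BR0_iff.1 hx k) (sub_nonneg.2 ht.2))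
    (mul_lt_mul_of_pos_left (BR0_eq_singleton_iff.1 hy k hk) ht.1)

/-- The follower action `j` is strictly inducible when some leader strategy makes it the unique best
response; the inducibility gap measures this property uniformly over all follower actions. -/
def StrictlyInducible (uf : Fin m → Fin n → ℝ) (j : Fin n) : Prop :=
  ∃ y ∈ simplex m, BR0 uf y = {j}

theorem strictlyInducible_of_indGap_pos {uf : Fin m → Fin n → ℝ} (hΔ : 0 < indGap uf) (j : Fin n) :
    StrictlyInducible uf j := by
  let margin (x : Fin m → ℝ) : ℝ := ⨅ k : {k : Fin n // k ≠ j}, (mixU uf x j - mixU uf x k)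
  have hsup : 0 < sSup (margin '' simplex m) :=
    hΔ.trans_le (ciInf_le (Set.finite_range _).bddBelow j)
  obtain ⟨y, hy, hmargin⟩ : ∃ y ∈ simplex m, 0 < margin y := by
    by_contra! hle
    exact hsup.not_ge (Real.sSup_nonpos (forall_mem_image.2 hle))
  refine ⟨y, hy, BR0_eq_singleton_iff.2 fun k hk => sub_pos.1 ?_⟩
  exact hmargin.trans_le (ciInf_le (Set.finite_range _).bddBelow (⟨k, hk⟩ : {k // k ≠ j}))

theorem StrictlyInducible.exists_lt_mixU {ul uf : Fin m → Fin n → ℝ} {x : Fin m → ℝ} {j : Fin n}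
    (hj : StrictlyInducible uf j) (hx : x ∈ simplex m) (hxj : j ∈ BR0 uf x) {a : ℝ}
    (ha : a < mixU ul x j) : ∃ z ∈ simplex m, BR0 uf z = {j} ∧ a < mixU ul z j := by
  obtain ⟨y, hy, hyj⟩ := hj
  have hcont : Continuous fun t : ℝ => mixU ul (AffineMap.lineMap x y t) j :=
    (continuous_mixU ul j).comp AffineMap.lineMap_continuous
  have hlt : ∀ᶠ t in 𝓝[>] (0 : ℝ), a < mixU ul (AffineMap.lineMap x y t) j :=
    nhdsWithin_le_nhds (hcont.continuousAt.eventually_const_lt (by simpa using ha))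
  obtain ⟨t, hat, ht⟩ := (hlt.and (Ioc_mem_nhdsGT zero_lt_one)).exists
  have hz : AffineMap.lineMap x y t ∈ simplex m :=
    (convex_stdSimplex ℝ (Fin m)).lineMap_mem hx hy (Ioc_subset_Icc_self ht)
  exact ⟨_, hz, BR0_lineMap_eq_singleton hxj hyj ht, hat⟩

theorem mixU_le_uSSE (ul : Fin m → Fin n → ℝ) {uf : Fin m → Fin n → ℝ} {x : Fin m → ℝ}
    (hx : x ∈ simplex m) {j : Fin n} (hj : j ∈ BR0 uf x) : mixU ul x j ≤ uSSE ul uf := by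
  have : NeZero n := ⟨j.pos.ne'⟩
  obtain ⟨C, hC⟩ := exists_forall_mixU_le ul
  have hbdd : BddAbove ((fun x => sSup (mixU ul x '' BR0 uf x)) '' simplex m) :=
    ⟨C, forall_mem_image.2 fun z hz =>
      csSup_le ((BR0_nonempty uf z).image _) (forall_mem_image.2 fun k _ => hC z hz k)⟩
  calc mixU ul x j ≤ sSup (mixU ul x '' BR0 uf x) :=
        le_csSup (Set.toFinite _).bddAbove (mem_image_of_mem _ hj)
    _ ≤ uSSE ul uf := le_csSup hbdd (mem_image_of_mem _ hx)

theorem exists_lt_mixU_of_lt_uSSE [NeZero n] (hm : (simplex m).Nonempty)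
    {ul uf : Fin m → Fin n → ℝ} {a : ℝ} (ha : a < uSSE ul uf) :
    ∃ x ∈ simplex m, ∃ j ∈ BR0 uf x, a < mixU ul x j := by
  obtain ⟨_, ⟨x, hx, rfl⟩, hax⟩ := exists_lt_of_lt_csSup (hm.image _) ha
  obtain ⟨_, ⟨j, hj, rfl⟩, haj⟩ := exists_lt_of_lt_csSup ((BR0_nonempty uf x).image _) hax
  exact ⟨x, hx, j, hj, haj⟩

theorem valBR_le_uSSE [NeZero n] (ul uf : Fin m → Fin n → ℝ) {δ : ℝ} (hδ : 0 < δ) {x : Fin m → ℝ}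
    (hx : x ∈ simplex m) : valBR ul uf δ x ≤ uSSE ul uf := by
  obtain ⟨j, hj⟩ := BR0_nonempty uf x
  calc valBR ul uf δ x ≤ mixU ul x j :=
        csInf_le (Set.toFinite _).bddBelow (mem_image_of_mem _ (BR0_subset_BRd uf hδ x hj))
    _ ≤ uSSE ul uf := mixU_le_uSSE ul hx hj

theorem uRSE_le_uSSE [NeZero n] (hm : (simplex m).Nonempty) (ul uf : Fin m → Fin n → ℝ) {δ : ℝ}
    (hδ : 0 < δ) : uRSE ul uf δ ≤ uSSE ul uf :=
  csSup_le (hm.image _) (forall_mem_image.2 fun _ hx => valBR_le_uSSE ul uf hδ hx)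

theorem valBR_le_uRSE [NeZero n] (ul uf : Fin m → Fin n → ℝ) {δ : ℝ} (hδ : 0 < δ) {x : Fin m → ℝ}
    (hx : x ∈ simplex m) : valBR ul uf δ x ≤ uRSE ul uf δ :=
  le_csSup ⟨uSSE ul uf, forall_mem_image.2 fun _ hz => valBR_le_uSSE ul uf hδ hz⟩
    (mem_image_of_mem _ hx)

theorem eventually_mixU_le_uRSE (ul : Fin m → Fin n → ℝ) {uf : Fin m → Fin n → ℝ} {z : Fin m → ℝ}
    (hz : z ∈ simplex m) {j : Fin n} (hj : BR0 uf z = {j}) :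
    ∀ᶠ δ in 𝓝[>] 0, mixU ul z j ≤ uRSE ul uf δ := by
  have : NeZero n := ⟨j.pos.ne'⟩
  filter_upwards [eventually_BRd_eq_BR0 uf z, self_mem_nhdsWithin] with δ hBR hδ
  calc mixU ul z j = valBR ul uf δ z := by rw [valBR, hBR, hj, image_singleton, csInf_singleton]
    _ ≤ uRSE ul uf δ := valBR_le_uRSE ul uf hδ hz

theorem uRSE_tendsto_uSSE_general [NeZero n] (hm : (simplex m).Nonempty)
    (ul uf : Fin m → Fin n → ℝ)
    (hind : ∀ x ∈ simplex m, ∀ j ∈ BR0 uf x, StrictlyInducible uf j) :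
    Tendsto (uRSE ul uf) (𝓝[>] 0) (𝓝 (uSSE ul uf)) := by
  refine tendsto_order.2 ⟨fun a ha => ?lower, fun b hb => ?upper⟩
  case lower =>
    obtain ⟨x, hx, j, hj, haj⟩ := exists_lt_mixU_of_lt_uSSE hm ha
    obtain ⟨z, hz, hzj, haz⟩ := (hind x hx j hj).exists_lt_mixU hx hj haj
    filter_upwards [eventually_mixU_le_uRSE ul hz hzj] with δ hδ
    exact haz.trans_le hδ
  case upper =>
    filter_upwards [self_mem_nhdsWithin] with δ hδ
    exact (uRSE_le_uSSE hm ul uf hδ).trans_lt hb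

end

/-- `u_RSE(δ) → u_SSE` as `δ → 0⁺` when the inducibility gap is positive. -/
theorem uRSE_tendsto_uSSE (m n : ℕ) (hn : 2 ≤ n) (ul uf : Fin m → Fin n → ℝ)
    (hul : ∀ i j, ul i j ∈ Set.Icc (0:ℝ) 1) (huf : ∀ i j, uf i j ∈ Set.Icc (0:ℝ) 1)
    (hΔ : 0 < indGap uf) :
    Filter.Tendsto (uRSE ul uf) (nhdsWithin 0 (Set.Ioi 0)) (nhds (uSSE ul uf)) := by
  have : NeZero n := ⟨by lia⟩
  have hind := strictlyInducible_of_indGap_pos hΔ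
  obtain ⟨y, hy, -⟩ := hind 0
  exact uRSE_tendsto_uSSE_general ⟨y, hy⟩ ul uf fun _ _ j _ => hind j
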